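/- Let G be a simple graph on a finite nonempty linearly ordered vertex type V that is a tree (connected and acyclic). Then any two walks in G from a vertex u to a vertex v have the same signed chain. -/

import Mathlib

/-!
Deleting a bridge `e` separates its endpoints, so the indicator function of the component of the
larger endpoint of `e` in `G - e` is a potential for the coefficient at `e`: a step of a walk
raises it by `1` when crossing `e` upwards, lowers it by `1` when crossing `e` downwards, and
leaves it unchanged otherwise. The coefficient of a walk at `e` therefore telescopes to the
difference of the potential at its two ends. In a forest every edge is a bridge.
-/

open SimpleGraph Matrix

/-- The oriented incidence matrix of a simple graph on a linearly ordered vertex type: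
the column of an edge with endpoints `a < b` has `+1` in row `b`, `-1` in row `a`,
and `0` elsewhere. -/
def orientedIncMat {V : Type*} [LinearOrder V] (G : SimpleGraph V) :
    Matrix V G.edgeSet ℤ := fun v e =>
  (if v = (e : Sym2 V).sup then 1 else 0) - (if v = (e : Sym2 V).inf then 1 else 0)


/-- The signed 1-chain of a single step of a walk: `+1` on the traversed edge if it is
traversed from smaller to larger endpoint, `-1` if traversed the other way. -/
def stepChain {V : Type*} [LinearOrder V] (G : SimpleGraph V) {a b : V} (_h : G.Adj a b) :
    G.edgeSet → ℤ := fun e =>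
  if (e : Sym2 V) = s(a, b) then (if a < b then 1 else -1) else 0

/-- The signed 1-chain of a walk: for each edge, the number of forward traversals minus
the number of backward traversals. -/
def walkChain {V : Type*} [LinearOrder V] {G : SimpleGraph V} :
    ∀ {u v : V}, G.Walk u v → (G.edgeSet → ℤ)
  | _, _, .nil => 0
  | _, _, .cons h p => stepChain _ h + walkChain p

section CutPotential

variable {V : Type*} {G : SimpleGraph V}

/-- The indicator function of the component of `r` in `G - e`. For a bridge `e` with endpoint `r`
it is the potential whose differences count the crossings of `e` towards `r`. -/
noncomputable def cutPotential (G : SimpleGraph V) (e : Sym2 V) (r : V) : V → ℤ :=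
  Set.indicator {v | (G.deleteEdges {e}).Reachable v r} 1

theorem cutPotential_self (e : Sym2 V) (r : V) : cutPotential G e r r = 1 :=
  Set.indicator_of_mem (Reachable.refl r) 1

theorem cutPotential_eq_zero_of_isBridge {a b : V} (h : G.IsBridge s(a, b)) :
    cutPotential G s(a, b) b a = 0 :=
  Set.indicator_of_notMem (isBridge_iff.mp h) 1

theorem cutPotential_eq_of_adj {e : Sym2 V} {a b : V} (r : V) (h : G.Adj a b) (he : e ≠ s(a, b)) :
    cutPotential G e r a = cutPotential G e r b := by
  have hab : (G.deleteEdges {e}).Reachable a b :=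
    (deleteEdges_adj.mpr ⟨h, he.symm⟩).reachable
  have hiff : (G.deleteEdges {e}).Reachable a r ↔ (G.deleteEdges {e}).Reachable b r :=
    ⟨hab.symm.trans, hab.trans⟩
  classical
  simp only [cutPotential, Set.indicator_apply, Set.mem_ofPred_eq, hiff, Pi.one_apply]

end CutPotential

section WalkChain

variable {V : Type*} [LinearOrder V] {G : SimpleGraph V}

theorem stepChain_apply_of_lt {e : G.edgeSet} {a b : V} (h : G.Adj a b)
    (he : (e : Sym2 V) = s(a, b)) (hab : a < b) : stepChain G h e = 1 := by
  simp [stepChain, he, hab]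

theorem stepChain_apply_of_gt {e : G.edgeSet} {a b : V} (h : G.Adj a b)
    (he : (e : Sym2 V) = s(a, b)) (hba : b < a) : stepChain G h e = -1 := by
  simp [stepChain, he, hba.not_gt]

theorem stepChain_apply_of_ne {e : G.edgeSet} {a b : V} (h : G.Adj a b)
    (he : (e : Sym2 V) ≠ s(a, b)) : stepChain G h e = 0 :=
  if_neg he

theorem stepChain_apply_eq_cutPotential_sub {e : G.edgeSet} (he : G.IsBridge e) {a b : V}
    (h : G.Adj a b) :
    stepChain G h e =
      cutPotential G e (e : Sym2 V).sup b - cutPotential G e (e : Sym2 V).sup a := by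
  by_cases heab : (e : Sym2 V) = s(a, b)
  · rcases h.ne.lt_or_gt with hab | hba
    · have hsup : (e : Sym2 V).sup = b := by rw [heab, Sym2.sup_mk, sup_of_le_right hab.le]
      have hfar : cutPotential G e b a = 0 := by
        rw [heab] at he ⊢
        exact cutPotential_eq_zero_of_isBridge he
      rw [stepChain_apply_of_lt h heab hab, hsup, cutPotential_self, hfar, sub_zero]
    · have hsup : (e : Sym2 V).sup = a := by rw [heab, Sym2.sup_mk, sup_of_le_left hba.le]
      have hfar : cutPotential G e a b = 0 := by
        rw [heab, Sym2.eq_swap] at he ⊢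
        exact cutPotential_eq_zero_of_isBridge he
      rw [stepChain_apply_of_gt h heab hba, hsup, cutPotential_self, hfar, zero_sub]
  · rw [stepChain_apply_of_ne h heab, cutPotential_eq_of_adj _ h heab, sub_self]

theorem walkChain_apply_eq_sub {e : G.edgeSet} {φ : V → ℤ}
    (hφ : ∀ ⦃a b : V⦄ (h : G.Adj a b), stepChain G h e = φ b - φ a) {u v : V} (p : G.Walk u v) :
    walkChain p e = φ v - φ u := by
  induction p with
  | nil => simp [walkChain]
  | cons h p ih => rw [walkChain, Pi.add_apply, hφ h, ih, add_comm, sub_add_sub_cancel]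

theorem walkChain_apply_eq_of_isBridge {e : G.edgeSet} (he : G.IsBridge e) {u v : V}
    (p q : G.Walk u v) : walkChain p e = walkChain q e := by
  have hφ := fun a b (h : G.Adj a b) ↦ stepChain_apply_eq_cutPotential_sub he h
  rw [walkChain_apply_eq_sub hφ p, walkChain_apply_eq_sub hφ q]

end WalkChain

theorem walkChain_eq_of_isTree_general {V : Type*} [LinearOrder V] {G : SimpleGraph V}
    (hG : G.IsAcyclic) {u v : V} (p q : G.Walk u v) : walkChain p = walkChain q :=
  funext fun e ↦ walkChain_apply_eq_of_isBridge (isAcyclic_iff_forall_isBridge.mp hG e.2) p q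

theorem walkChain_eq_of_isTree {V : Type*} [Fintype V] [Nonempty V] [LinearOrder V]
    (G : SimpleGraph V) (hG : G.IsTree) {u v : V} (p q : G.Walk u v) :
    walkChain p = walkChain q :=
  walkChain_eq_of_isTree_general hG.isAcyclic p q
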